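/- arXiv:1510.07255 — 2 statements merged into one kernel-verified Lean document; each statement's English description precedes it below -/
import Mathlib

section
/- The deformed bracket [[·,·]] makes S a Lie algebra over K: for all f, g ∈ S one has [[f,g]] ∈ S (the deformed bracket of divergence-free fields is divergence-free), the bracket is K-bilinear and alternating ([[f,f]] = 0), and the Jacobi identity [[f,[[g,h]]]] + [[g,[[h,f]]]] + [[h,[[f,g]]]] = 0 holds for all f, g, h ∈ S. (This Lie algebra is the desuperization F(mb(3;N|8)), a deform of the divergence-free Lie algebra svect(5) in characteristic 2.) -/
open MvPolynomial

/-- The polynomial ring `R = K[u₁, …, u₅]` (index `i : Fin 5` corresponds to `u_{i+1}`). -/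
abbrev R5 (K : Type*) [Field K] := MvPolynomial (Fin 5) K

noncomputable section

variable (K : Type*) [Field K]

/-- The set `S` of divergence-free vector fields `Σ f_i ∂_i`, i.e. `svect(5)`,
encoded by their coefficient tuples. -/
def svectFive : Set (Fin 5 → R5 K) :=
  {f | ∑ i : Fin 5, pderiv i (f i) = 0}

/-- The building block `∂_i f₄ · ∂_j g₅ + ∂_i f₅ · ∂_j g₄` of the deforming cocycle
(recall `f₄ = f 3` and `f₅ = f 4` in `Fin 5` indexing). -/
def defTerm (f g : Fin 5 → R5 K) (i j : Fin 5) : R5 K :=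
  pderiv i (f 3) * pderiv j (g 4) + pderiv i (f 4) * pderiv j (g 3)

/-- The deforming cocycle: for `m ∈ {1,2,3}` it is the sum of `defTerm` over both ordered
pairs `(i,j)` of distinct indices with `{i,j,m} = {1,2,3}`; for `m ∈ {4,5}` it vanishes. -/
def defCocycle (f g : Fin 5 → R5 K) : Fin 5 → R5 K :=
  ![defTerm K f g 1 2 + defTerm K f g 2 1,
    defTerm K f g 0 2 + defTerm K f g 2 0,
    defTerm K f g 0 1 + defTerm K f g 1 0,
    0, 0]

/-- The deformed bracket `[[f,g]]_m = Σ_i (f_i ∂_i g_m + g_i ∂_i f_m) + cocycle`. -/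
def defBracket (f g : Fin 5 → R5 K) : Fin 5 → R5 K := fun m =>
  (∑ i : Fin 5, (f i * pderiv i (g m) + g i * pderiv i (f m))) + defCocycle K f g m

end

/-!
In characteristic 2 the deforming term is `c(f, g) = ∇f₄ × ∇g₅ + ∇f₅ × ∇g₄`, where `∇` is the
gradient in the first three variables. It is alternating, takes divergence-free values, and
`c(f, ·)` kills the image of `c`, so the Jacobi identity amounts to that of the Lie bracket together
with the cocycle identity for `c`.

For the latter, differentiate `∇a × ∇b` along `f`, writing `f a` for the derivative of `a`. By the
matrix identity `Mu × v + u × Mv = tr M • (u × v) - Mᵀ(u × v)`, with `M` the Jacobian matrix of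
`(f₁, f₂, f₃)`, the first three components of `[f, ∇a × ∇b]` are those of
`∇(f a) × ∇b + ∇a × ∇(f b)`, minus `tr M • (∇a × ∇b)`, minus terms containing `∇f₄` and `∇f₅`.
Since `f` is divergence-free, `tr M = -(∂₄f₄ + ∂₅f₅)`, and in the cyclic sum everything cancels in
pairs.
-/

open Matrix

/-- Polynomial vector fields `∑ i, f i ∂_i` on affine space, encoded as in `svectFive` by their
coefficient tuples; the derivation with coefficients `f` is `mkDerivation R f`. -/
abbrev PolynomialVectorField (σ R : Type*) [CommSemiring R] := σ → MvPolynomial σ R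

theorem pderiv_comm {σ R : Type*} [CommSemiring R] (i j : σ) (p : MvPolynomial σ R) :
    pderiv i (pderiv j p) = pderiv j (pderiv i p) := by
  ext m
  rcases eq_or_ne i j with rfl | h
  · rfl
  · simp [coeff_pderiv, add_right_comm, h, h.symm, mul_right_comm]

theorem mkDerivation_apply_eq_sum {σ R : Type*} [Fintype σ] [CommSemiring R]
    (f : PolynomialVectorField σ R) (p : MvPolynomial σ R) :
    mkDerivation R f p = ∑ i, f i * pderiv i p := by
  classical
  induction p using MvPolynomial.induction_on with
  | C a => simp
  | add p q hp hq => simp [hp, hq, mul_add, Finset.sum_add_distrib]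
  | mul_X p j hp =>
    simp [hp, pderiv_X, Pi.single_apply, mul_add, Finset.sum_add_distrib, Finset.mul_sum,
      mul_left_comm, mul_comm]

theorem pderiv_mkDerivation {σ R : Type*} [Fintype σ] [CommSemiring R]
    (f : PolynomialVectorField σ R) (i : σ) (p : MvPolynomial σ R) :
    pderiv i (mkDerivation R f p) =
      mkDerivation R f (pderiv i p) + ∑ k, pderiv k p * pderiv i (f k) := by
  simp only [mkDerivation_apply_eq_sum, map_sum, pderiv_mul, Finset.sum_add_distrib,
    pderiv_comm i, add_comm, mul_comm]

theorem mulVec_cross_add_cross_mulVec {R : Type*} [CommRing R]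
    (M : Matrix (Fin 3) (Fin 3) R) (u v : Fin 3 → R) :
    (M *ᵥ u) ⨯₃ v + u ⨯₃ (M *ᵥ v) = M.trace • (u ⨯₃ v) - Mᵀ *ᵥ (u ⨯₃ v) := by
  ext i
  simp only [cross_apply, mulVec, dotProduct, trace, diag_apply, transpose_apply,
    Fin.sum_univ_three, Pi.add_apply, Pi.sub_apply, Pi.smul_apply, smul_eq_mul]
  fin_cases i <;> simp only [Fin.zero_eta, Fin.mk_one, Fin.reduceFinMk, cons_val] <;> ring

theorem derivation_cross {R A : Type*} [CommRing R] [CommRing A] [Algebra R A]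
    (D : Derivation R A A) (u v : Fin 3 → A) :
    D ∘ (u ⨯₃ v) = (D ∘ u) ⨯₃ v + u ⨯₃ (D ∘ v) := by
  ext i
  simp only [Function.comp_apply, Pi.add_apply, cross_apply]
  fin_cases i <;>
    simp only [Fin.zero_eta, Fin.mk_one, Fin.reduceFinMk, cons_val, map_sub, Derivation.leibniz,
      smul_eq_mul] <;> ring

namespace PolynomialVectorField

section LieBracket

variable {σ R : Type*} [Fintype σ] [CommRing R]

/-- The Lie bracket of polynomial vector fields, the commutator of the associated derivations. -/
noncomputable def lieBracket : PolynomialVectorField σ R →ₗ[R] PolynomialVectorField σ R →ₗ[R]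
    PolynomialVectorField σ R :=
  LinearMap.mk₂ R (fun f g m => ∑ i, (f i * pderiv i (g m) - g i * pderiv i (f m)))
    (fun _ _ _ => by
      ext1 m
      simp only [Pi.add_apply, map_add, ← Finset.sum_add_distrib]
      exact Finset.sum_congr rfl fun _ _ => by ring)
    (fun _ _ _ => by ext1 m; simp [Finset.smul_sum, smul_sub])
    (fun _ _ _ => by
      ext1 m
      simp only [Pi.add_apply, map_add, ← Finset.sum_add_distrib]
      exact Finset.sum_congr rfl fun _ _ => by ring)
    (fun _ _ _ => by ext1 m; simp [Finset.smul_sum, smul_sub])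

theorem lieBracket_apply (f g : PolynomialVectorField σ R) (m : σ) :
    lieBracket f g m = mkDerivation R f (g m) - mkDerivation R g (f m) := by
  simp [lieBracket, mkDerivation_apply_eq_sum]

theorem lieBracket_self (f : PolynomialVectorField σ R) : lieBracket f f = 0 := by
  ext1 m
  simp [lieBracket_apply]

theorem mkDerivation_lieBracket (f g : PolynomialVectorField σ R) :
    mkDerivation R (lieBracket f g) = ⁅mkDerivation R f, mkDerivation R g⁆ :=
  derivation_ext fun m => by simp [lieBracket_apply, Derivation.commutator_apply]

theorem lieBracket_jacobi (f g h : PolynomialVectorField σ R) :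
    lieBracket f (lieBracket g h) + lieBracket g (lieBracket h f)
      + lieBracket h (lieBracket f g) = 0 := by
  ext1 m
  simp only [Pi.add_apply, Pi.zero_apply, lieBracket_apply, mkDerivation_lieBracket,
    Derivation.commutator_apply, map_sub]
  abel

/-- The divergence `∑ i, ∂_i (f i)` of a polynomial vector field. -/
noncomputable def divergence : PolynomialVectorField σ R →ₗ[R] MvPolynomial σ R :=
  ∑ i, (pderiv i : Derivation R _ _).toLinearMap ∘ₗ LinearMap.proj i

theorem divergence_apply (f : PolynomialVectorField σ R) :
    divergence f = ∑ i, pderiv i (f i) := by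
  simp [divergence]

theorem divergence_lieBracket (f g : PolynomialVectorField σ R) :
    divergence (lieBracket f g) =
      mkDerivation R f (divergence g) - mkDerivation R g (divergence f) := by
  have jacobians_comm : ∑ i, ∑ k, pderiv k (f i) * pderiv i (g k) =
      ∑ i, ∑ k, pderiv k (g i) * pderiv i (f k) := by
    rw [Finset.sum_comm]
    simp only [mul_comm]
  simp only [divergence_apply, lieBracket_apply, map_sub, map_sum, pderiv_mkDerivation,
    Finset.sum_sub_distrib, Finset.sum_add_distrib, jacobians_comm]
  abel

end LieBracket

section CrossGradient

variable {R : Type*} [CommRing R] {n : ℕ}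

/-- The gradient of a polynomial in `3 + n` variables with respect to the first three. -/
noncomputable def gradient :
    MvPolynomial (Fin (3 + n)) R →ₗ[R] Fin 3 → MvPolynomial (Fin (3 + n)) R :=
  LinearMap.pi fun i => (pderiv (Fin.castAdd n i) : Derivation R _ _).toLinearMap

theorem gradient_apply (p : MvPolynomial (Fin (3 + n)) R) (i : Fin 3) :
    gradient p i = pderiv (Fin.castAdd n i) p := rfl

/-- The vector field `∇a × ∇b` along the first three of `3 + n` coordinates, whose derivation is
the Jacobian determinant `p ↦ det (∇a, ∇b, ∇p)`. -/
noncomputable def crossGradient : MvPolynomial (Fin (3 + n)) R →ₗ[R]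
    MvPolynomial (Fin (3 + n)) R →ₗ[R] PolynomialVectorField (Fin (3 + n)) R :=
  LinearMap.mk₂ R (fun a b => Fin.append (gradient a ⨯₃ gradient b) 0)
    (fun _ _ _ => by ext1 m; refine Fin.addCases ?_ ?_ m <;> simp)
    (fun _ _ _ => by ext1 m; refine Fin.addCases ?_ ?_ m <;> simp)
    (fun _ _ _ => by ext1 m; refine Fin.addCases ?_ ?_ m <;> simp)
    (fun _ _ _ => by ext1 m; refine Fin.addCases ?_ ?_ m <;> simp)

theorem crossGradient_castAdd (a b : MvPolynomial (Fin (3 + n)) R) (i : Fin 3) :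
    crossGradient a b (Fin.castAdd n i) = (gradient a ⨯₃ gradient b) i := by
  simp [crossGradient]

theorem crossGradient_natAdd (a b : MvPolynomial (Fin (3 + n)) R) (k : Fin n) :
    crossGradient a b (Fin.natAdd 3 k) = 0 := by
  simp [crossGradient]

theorem crossGradient_self (a : MvPolynomial (Fin (3 + n)) R) : crossGradient a a = 0 := by
  ext1 m
  refine Fin.addCases ?_ ?_ m <;> simp [crossGradient_castAdd, crossGradient_natAdd]

theorem neg_crossGradient (a b : MvPolynomial (Fin (3 + n)) R) :
    -crossGradient a b = crossGradient b a :=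
  LinearMap.IsAlt.neg crossGradient_self a b

theorem divergence_crossGradient (a b : MvPolynomial (Fin (3 + n)) R) :
    divergence (crossGradient a b) = 0 := by
  simp only [divergence_apply, Fin.sum_univ_add, crossGradient_castAdd, crossGradient_natAdd,
    map_zero, Finset.sum_const_zero, add_zero, Fin.sum_univ_three, cross_apply, gradient_apply,
    cons_val, map_sub, pderiv_mul]
  simp only [pderiv_comm (Fin.castAdd n 1) (Fin.castAdd n 0),
    pderiv_comm (Fin.castAdd n 2) (Fin.castAdd n 0),
    pderiv_comm (Fin.castAdd n 2) (Fin.castAdd n 1)]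
  ring

theorem mkDerivation_crossGradient (a b p : MvPolynomial (Fin (3 + n)) R) :
    mkDerivation R (crossGradient a b) p = (gradient a ⨯₃ gradient b) ⬝ᵥ gradient p := by
  simp [mkDerivation_apply_eq_sum, Fin.sum_univ_add, crossGradient_castAdd, crossGradient_natAdd,
    dotProduct, gradient_apply]

theorem gradient_mkDerivation (f : PolynomialVectorField (Fin (3 + n)) R)
    (p : MvPolynomial (Fin (3 + n)) R) :
    gradient (mkDerivation R f p) =
      mkDerivation R f ∘ gradient p + ∑ k, pderiv k p • gradient (f k) := by
  ext1 i
  simp [gradient_apply, pderiv_mkDerivation]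

/-- The Jacobian matrix `(∂_i f_j)` of the first three components of a vector field with respect
to the first three variables. -/
noncomputable def jacobian (f : PolynomialVectorField (Fin (3 + n)) R) :
    Matrix (Fin 3) (Fin 3) (MvPolynomial (Fin (3 + n)) R) :=
  Matrix.of fun i j => gradient (f (Fin.castAdd n j)) i

theorem sum_pderiv_smul_gradient (f : PolynomialVectorField (Fin (3 + n)) R)
    (p : MvPolynomial (Fin (3 + n)) R) :
    ∑ k, pderiv k p • gradient (f k) = jacobian f *ᵥ gradient p +
      ∑ k, pderiv (Fin.natAdd 3 k) p • gradient (f (Fin.natAdd 3 k)) := by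
  ext1 i
  simp [Fin.sum_univ_add, jacobian, mulVec, dotProduct, gradient_apply, mul_comm]

theorem lieBracket_crossGradient_natAdd (f : PolynomialVectorField (Fin (3 + n)) R)
    (a b : MvPolynomial (Fin (3 + n)) R) (k : Fin n) :
    lieBracket f (crossGradient a b) (Fin.natAdd 3 k) =
      -((gradient a ⨯₃ gradient b) ⬝ᵥ gradient (f (Fin.natAdd 3 k))) := by
  simp [lieBracket_apply, crossGradient_natAdd, mkDerivation_crossGradient]

theorem mkDerivation_comp_cross_gradient (f : PolynomialVectorField (Fin (3 + n)) R)
    (a b : MvPolynomial (Fin (3 + n)) R) :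
    mkDerivation R f ∘ (gradient a ⨯₃ gradient b) =
      gradient (mkDerivation R f a) ⨯₃ gradient b + gradient a ⨯₃ gradient (mkDerivation R f b)
        - (jacobian f).trace • (gradient a ⨯₃ gradient b)
        + (jacobian f)ᵀ *ᵥ (gradient a ⨯₃ gradient b)
        - ∑ k, (pderiv (Fin.natAdd 3 k) a • gradient (f (Fin.natAdd 3 k)) ⨯₃ gradient b
          + pderiv (Fin.natAdd 3 k) b • gradient a ⨯₃ gradient (f (Fin.natAdd 3 k))) := by
  have comp_gradient (p : MvPolynomial (Fin (3 + n)) R) :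
      mkDerivation R f ∘ gradient p = gradient (mkDerivation R f p) - jacobian f *ᵥ gradient p
        - ∑ k, pderiv (Fin.natAdd 3 k) p • gradient (f (Fin.natAdd 3 k)) := by
    rw [gradient_mkDerivation, sum_pderiv_smul_gradient]
    abel
  simp only [derivation_cross, comp_gradient, map_sub, map_sum, map_smul, LinearMap.sub_apply,
    LinearMap.sum_apply, LinearMap.smul_apply, Finset.sum_add_distrib]
  linear_combination
    -mulVec_cross_add_cross_mulVec (jacobian f) (gradient a) (gradient b)

theorem lieBracket_crossGradient_castAdd (f : PolynomialVectorField (Fin (3 + n)) R)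
    (a b : MvPolynomial (Fin (3 + n)) R) (i : Fin 3) :
    lieBracket f (crossGradient a b) (Fin.castAdd n i) =
      (crossGradient (mkDerivation R f a) b + crossGradient a (mkDerivation R f b)
        - (jacobian f).trace • crossGradient a b
        - ∑ k, (pderiv (Fin.natAdd 3 k) a • crossGradient (f (Fin.natAdd 3 k)) b
          + pderiv (Fin.natAdd 3 k) b • crossGradient a (f (Fin.natAdd 3 k))))
        (Fin.castAdd n i) := by
  have mkDerivation_crossGradient_f : mkDerivation R (crossGradient a b) (f (Fin.castAdd n i)) =
      ((jacobian f)ᵀ *ᵥ (gradient a ⨯₃ gradient b)) i := by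
    rw [mkDerivation_crossGradient, dotProduct_comm]
    rfl
  have comp_cross := congr_fun (mkDerivation_comp_cross_gradient f a b) i
  rw [Function.comp_apply] at comp_cross
  rw [lieBracket_apply, crossGradient_castAdd, comp_cross, mkDerivation_crossGradient_f]
  simp only [Pi.sub_apply, Pi.add_apply, Pi.smul_apply, Finset.sum_apply, smul_eq_mul,
    crossGradient_castAdd]
  ring

theorem divergence_eq_trace_jacobian_add (f : PolynomialVectorField (Fin (3 + n)) R) :
    divergence f = (jacobian f).trace + ∑ k, pderiv (Fin.natAdd 3 k) (f (Fin.natAdd 3 k)) := by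
  simp [divergence_apply, Fin.sum_univ_add, trace, jacobian, gradient_apply]

end CrossGradient

section DeformedBracket

variable {R : Type*} [CommRing R] {n : ℕ} (p q : Fin n)

/-- The deforming cocycle `(f, g) ↦ ∇f_p × ∇g_q + ∇f_q × ∇g_p` attached to two of the last `n`
coordinates; for `n = 2` and `p ≠ q` this is `defCocycle`, with signs making it alternating over
every base ring. -/
noncomputable def crossCocycle : PolynomialVectorField (Fin (3 + n)) R →ₗ[R]
    PolynomialVectorField (Fin (3 + n)) R →ₗ[R] PolynomialVectorField (Fin (3 + n)) R :=
  crossGradient.compl₁₂ (LinearMap.proj (Fin.natAdd 3 p)) (LinearMap.proj (Fin.natAdd 3 q))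
    + crossGradient.compl₁₂ (LinearMap.proj (Fin.natAdd 3 q)) (LinearMap.proj (Fin.natAdd 3 p))

theorem crossCocycle_apply (f g : PolynomialVectorField (Fin (3 + n)) R) :
    crossCocycle p q f g = crossGradient (f (Fin.natAdd 3 p)) (g (Fin.natAdd 3 q))
      + crossGradient (f (Fin.natAdd 3 q)) (g (Fin.natAdd 3 p)) := rfl

theorem crossCocycle_natAdd (f g : PolynomialVectorField (Fin (3 + n)) R) (k : Fin n) :
    crossCocycle p q f g (Fin.natAdd 3 k) = 0 := by
  simp [crossCocycle_apply, crossGradient_natAdd]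

theorem crossCocycle_self (f : PolynomialVectorField (Fin (3 + n)) R) :
    crossCocycle p q f f = 0 := by
  rw [crossCocycle_apply, ← neg_crossGradient, neg_add_cancel]

theorem divergence_crossCocycle (f g : PolynomialVectorField (Fin (3 + n)) R) :
    divergence (crossCocycle p q f g) = 0 := by
  simp [crossCocycle_apply, divergence_crossGradient]

theorem crossCocycle_crossCocycle (f g h : PolynomialVectorField (Fin (3 + n)) R) :
    crossCocycle p q f (crossCocycle p q g h) = 0 := by
  simp [crossCocycle_apply p q f, crossCocycle_natAdd]

/-- The Lie bracket deformed by `crossCocycle`; for `n = 2`, `p = 0`, `q = 1` it extends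
`defBracket` to an arbitrary base ring. -/
noncomputable def deformedBracket : PolynomialVectorField (Fin (3 + n)) R →ₗ[R]
    PolynomialVectorField (Fin (3 + n)) R →ₗ[R] PolynomialVectorField (Fin (3 + n)) R :=
  lieBracket + crossCocycle p q

theorem deformedBracket_apply (f g : PolynomialVectorField (Fin (3 + n)) R) :
    deformedBracket p q f g = lieBracket f g + crossCocycle p q f g := rfl

theorem deformedBracket_self (f : PolynomialVectorField (Fin (3 + n)) R) :
    deformedBracket p q f f = 0 := by
  rw [deformedBracket_apply, lieBracket_self, crossCocycle_self, add_zero]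

theorem divergence_deformedBracket {f g : PolynomialVectorField (Fin (3 + n)) R}
    (hf : divergence f = 0) (hg : divergence g = 0) :
    divergence (deformedBracket p q f g) = 0 := by
  simp [deformedBracket_apply, divergence_lieBracket, divergence_crossCocycle, hf, hg]

variable [CharP R 2]

theorem crossGradient_comm (a b : MvPolynomial (Fin (3 + n)) R) :
    crossGradient a b = crossGradient b a := by
  rw [← neg_crossGradient]
  ext1 m
  exact CharTwo.neg_eq _

theorem crossCocycle_isCocycle_natAdd (f g h : PolynomialVectorField (Fin (3 + n)) R) {k : Fin n}
    (hk : k = p ∨ k = q) :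
    (lieBracket f (crossCocycle p q g h) + lieBracket g (crossCocycle p q h f)
      + lieBracket h (crossCocycle p q f g)) (Fin.natAdd 3 k) = 0 := by
  simp only [crossCocycle_apply, map_add, Pi.add_apply, lieBracket_crossGradient_natAdd]
  rcases hk with rfl | rfl
  -- The scalar triple products are alternating and occur in pairs, so they cancel.
  all_goals
    simp only [dotProduct_comm, triple_product_permutation (gradient (f _)),
      triple_product_permutation (gradient (g _))]
    grind

variable {p q}

theorem crossCocycle_isCocycle_castAdd (hpq : p ≠ q) (huniv : Finset.univ = {p, q})
    {f g h : PolynomialVectorField (Fin (3 + n)) R}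
    (hf : divergence f = 0) (hg : divergence g = 0) (hh : divergence h = 0) (i : Fin 3) :
    (lieBracket f (crossCocycle p q g h) + crossCocycle p q f (lieBracket g h)
      + (lieBracket g (crossCocycle p q h f) + crossCocycle p q g (lieBracket h f))
      + (lieBracket h (crossCocycle p q f g) + crossCocycle p q h (lieBracket f g)))
        (Fin.castAdd n i) = 0 := by
  -- The derivatives of `mkDerivation` cancel in pairs, and an off-diagonal `∂_k f_l`, `k ≠ l`,
  -- occurs twice with the same cross product. A diagonal `∂_k f_k` occurs with `∇g_p × ∇h_q` and
  -- with `∇g_q × ∇h_p`; their sum is what the trace `-(∂_p f_p + ∂_q f_q)` contributes.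
  rw [divergence_eq_trace_jacobian_add, ← eq_neg_iff_add_eq_zero] at hf hg hh
  simp only [crossCocycle_apply, map_add, map_sub, Pi.add_apply, Pi.sub_apply, Pi.smul_apply,
    smul_eq_mul, lieBracket_crossGradient_castAdd, lieBracket_apply _ _ (Fin.natAdd 3 _), hf, hg,
    hh, huniv, Finset.sum_pair hpq]
  simp only [crossGradient_comm (mkDerivation R _ _) _, crossGradient_comm (h _) (f _),
    crossGradient_comm (h _) (g _), crossGradient_comm (g _) (f _)]
  grind

theorem crossCocycle_isCocycle (hpq : p ≠ q) (huniv : Finset.univ = {p, q})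
    {f g h : PolynomialVectorField (Fin (3 + n)) R}
    (hf : divergence f = 0) (hg : divergence g = 0) (hh : divergence h = 0) :
    lieBracket f (crossCocycle p q g h) + crossCocycle p q f (lieBracket g h)
      + (lieBracket g (crossCocycle p q h f) + crossCocycle p q g (lieBracket h f))
      + (lieBracket h (crossCocycle p q f g) + crossCocycle p q h (lieBracket f g)) = 0 := by
  ext1 m
  refine Fin.addCases (crossCocycle_isCocycle_castAdd hpq huniv hf hg hh) (fun k => ?_) m
  have hk : k = p ∨ k = q := by simpa [huniv] using Finset.mem_univ k
  simpa [crossCocycle_natAdd] using crossCocycle_isCocycle_natAdd p q f g h hk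

theorem deformedBracket_jacobi (hpq : p ≠ q) (huniv : Finset.univ = {p, q})
    {f g h : PolynomialVectorField (Fin (3 + n)) R}
    (hf : divergence f = 0) (hg : divergence g = 0) (hh : divergence h = 0) :
    deformedBracket p q f (deformedBracket p q g h)
      + deformedBracket p q g (deformedBracket p q h f)
      + deformedBracket p q h (deformedBracket p q f g) = 0 := by
  simp only [deformedBracket_apply, map_add, crossCocycle_crossCocycle]
  linear_combination
    lieBracket_jacobi f g h + crossCocycle_isCocycle hpq huniv hf hg hh

end DeformedBracket

end PolynomialVectorField

open PolynomialVectorField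

theorem mem_svectFive_iff {K : Type*} [Field K] {f : Fin 5 → R5 K} :
    f ∈ svectFive K ↔ divergence f = 0 := by
  rw [divergence_apply]
  rfl

theorem crossCocycle_zero_one_eq_defCocycle {K : Type*} [Field K] [CharP K 2]
    (f g : Fin 5 → R5 K) : crossCocycle (n := 2) 0 1 f g = defCocycle K f g := by
  ext1 m
  refine Fin.addCases (m := 3) (n := 2) (fun i => ?_) (fun k => ?_) m
  · simp only [crossCocycle_apply, Pi.add_apply, crossGradient_castAdd, cross_apply,
      gradient_apply, CharTwo.sub_eq_add, defCocycle, defTerm]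
    fin_cases i <;>
      simp only [Fin.zero_eta, Fin.mk_one, Fin.reduceFinMk, Fin.reduceCastAdd, Fin.reduceNatAdd,
        Nat.reduceAdd, cons_val] <;> ring
  · rw [crossCocycle_natAdd]
    fin_cases k <;> rfl

theorem deformedBracket_zero_one_eq_defBracket {K : Type*} [Field K] [CharP K 2]
    (f g : Fin 5 → R5 K) : deformedBracket (n := 2) 0 1 f g = defBracket K f g := by
  ext1 m
  rw [deformedBracket_apply, crossCocycle_zero_one_eq_defCocycle, Pi.add_apply, lieBracket_apply,
    mkDerivation_apply_eq_sum, mkDerivation_apply_eq_sum, CharTwo.sub_eq_add,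
    ← Finset.sum_add_distrib]
  rfl

/-- Bilinearity is built into the type of `deformedBracket`. -/
theorem defBracket_isLieAlgebra_general {R : Type*} [CommRing R] [CharP R 2] :
    let B := deformedBracket (R := R) (n := 2) 0 1
    (∀ f g, divergence f = 0 → divergence g = 0 → divergence (B f g) = 0) ∧
    (∀ f, B f f = 0) ∧
    (∀ f g h, divergence f = 0 → divergence g = 0 → divergence h = 0 →
      B f (B g h) + B g (B h f) + B h (B f g) = 0) :=
  ⟨fun _ _ => divergence_deformedBracket 0 1, deformedBracket_self 0 1,
    fun _ _ _ => deformedBracket_jacobi (by decide) (by decide)⟩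

/-- For `p = 2`, the deformed bracket `[[·,·]]` makes `S = svect(5)` a Lie algebra over `K`:
`S` is closed under `[[·,·]]`, the bracket is `K`-bilinear and alternating on `S`, and the
Jacobi identity holds on `S`.  (This Lie algebra is `F(mb(3;N|8))`, a deform of
`svect(5)` in characteristic 2.) -/
theorem defBracket_isLieAlgebra {K : Type*} [Field K] [CharP K 2] :
    (∀ f ∈ svectFive K, ∀ g ∈ svectFive K, defBracket K f g ∈ svectFive K) ∧
    (∀ f ∈ svectFive K, ∀ g ∈ svectFive K, ∀ h ∈ svectFive K,
      defBracket K f (g + h) = defBracket K f g + defBracket K f h ∧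
      defBracket K (f + g) h = defBracket K f h + defBracket K g h) ∧
    (∀ (a : K), ∀ f ∈ svectFive K, ∀ g ∈ svectFive K,
      defBracket K f (a • g) = a • defBracket K f g ∧
      defBracket K (a • f) g = a • defBracket K f g) ∧
    (∀ f ∈ svectFive K, defBracket K f f = 0) ∧
    (∀ f ∈ svectFive K, ∀ g ∈ svectFive K, ∀ h ∈ svectFive K,
      defBracket K f (defBracket K g h) + defBracket K g (defBracket K h f)
        + defBracket K h (defBracket K f g) = 0) := by
  obtain ⟨closed, alternating, jacobi⟩ := defBracket_isLieAlgebra_general (R := K)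
  simp only [mem_svectFive_iff, ← deformedBracket_zero_one_eq_defBracket]
  exact ⟨fun f hf g hg => closed f g hf hg,
    fun f _ g _ h _ => ⟨map_add _ g h, LinearMap.map_add₂ _ f g h⟩,
    fun a f _ g _ => ⟨map_smul _ a g, LinearMap.map_smul₂ _ a f g⟩,
    fun f _ => alternating f, fun f hf g hg h hh => jacobi f g h hf hg hh⟩
end

section
/- For all f, g ∈ B one has [M_f, M_g] = M_{{f,g}} (commutator of derivations of B). Moreover, for any fixed a, b ∈ K, the subspace b_{a,b} := {f ∈ B : (b + a·E_q)(∂_τ f) + a·Δf = 0} is closed under the pericontact bracket: if f, g ∈ b_{a,b} then {f,g} ∈ b_{a,b}. Consequently {M_f : f ∈ b_{a,b}} is a Lie subalgebra of Der_K(B) — the characteristic-2 analog po_{a,b} = F(b_{a,b}(n)) of the deformed Buttin series, a subalgebra of the contact-type vector fields having no analog for p ≠ 2. -/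
open MvPolynomial

/-- Index type for the variables of `B`: `none` is `τ`, `Sum.inl i` is `q_i` and
`Sum.inr i` is `ξ_i`. -/
abbrev BIdx (n : ℕ) := Option (Fin n ⊕ Fin n)

/-- The polynomial ring `K[τ, q₁,…,qₙ, ξ₁,…,ξₙ]`, whose quotient by `(ξ₁²,…,ξₙ²)` is the
algebra `B` of the desuperized pericontact series for `p = 2`. -/
abbrev BR (K : Type*) [Field K] (n : ℕ) := MvPolynomial (BIdx n) K

noncomputable section

variable (K : Type*) [Field K] (n : ℕ)

/-- The ideal `(ξ₁², …, ξₙ²)`, so that `B = K[τ,q][ξ] ⧸ xiIdeal`; working modulo this ideal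
encodes working in `B` (everything descends since `∂(ξ_i²) = 2ξ_i = 0` in char 2). -/
def xiIdeal : Ideal (BR K n) :=
  Ideal.span (Set.range fun i : Fin n => (X (some (Sum.inr i)) : BR K n) ^ 2)

/-- The Euler operator `E_q = Σ q_i ∂_{q_i}`. -/
def eulerQ (f : BR K n) : BR K n :=
  ∑ i : Fin n, X (some (Sum.inl i)) * pderiv (some (Sum.inl i)) f

/-- The operator `Δ = Σ ∂_{q_i} ∘ ∂_{ξ_i}`. -/
def lapQXi (f : BR K n) : BR K n :=
  ∑ i : Fin n, pderiv (some (Sum.inl i)) (pderiv (some (Sum.inr i)) f)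

/-- The pericontact vector field
`M_f = f ∂_τ + Σ ( ∂_{q_i}f (∂_{ξ_i} + q_i ∂_τ) + (∂_{ξ_i}f + q_i ∂_τ f) ∂_{q_i} )`. -/
def MF (f : BR K n) : BR K n → BR K n := fun h =>
  f * pderiv (none : BIdx n) h
    + ∑ i : Fin n,
        (pderiv (some (Sum.inl i)) f *
            (pderiv (some (Sum.inr i)) h
              + X (some (Sum.inl i)) * pderiv (none : BIdx n) h)
          + (pderiv (some (Sum.inr i)) f
              + X (some (Sum.inl i)) * pderiv (none : BIdx n) f) *
            pderiv (some (Sum.inl i)) h)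

/-- The pericontact bracket
`{f,g} = (∂_τ f)(g + E_q g) + (f + E_q f)(∂_τ g) + Σ (∂_{q_i}f ∂_{ξ_i}g + ∂_{ξ_i}f ∂_{q_i}g)`. -/
def periBr (f g : BR K n) : BR K n :=
  pderiv (none : BIdx n) f * (g + eulerQ K n g)
    + (f + eulerQ K n f) * pderiv (none : BIdx n) g
    + ∑ i : Fin n,
        (pderiv (some (Sum.inl i)) f * pderiv (some (Sum.inr i)) g
          + pderiv (some (Sum.inr i)) f * pderiv (some (Sum.inl i)) g)

/-- The defining expression `(b + a E_q)(∂_τ f) + a Δ f` of the subalgebra `b_{a,b}`. -/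
def babCond (a b : K) (f : BR K n) : BR K n :=
  C b * pderiv (none : BIdx n) f + C a * eulerQ K n (pderiv (none : BIdx n) f)
    + C a * lapQXi K n f

end

/-!
The vector fields `X i = ∂_{q_i}`, `Y i = ∂_{ξ_i} + q_i ∂_τ` and `T = ∂_τ` satisfy the Heisenberg
relations `[X i, Y j] = δ_{ij} T`. With `L = Σ Y i ∘ X i` and `⟨f, g⟩ = L (f g) - f L g - g L f`,
the pericontact objects become `M_f = f T + ⟨f, ·⟩` and `{f, g} = T (f g) + ⟨f, g⟩`, and `b_{a,b}`
is the kernel of `b T + a L`. In characteristic 2, `L² = T L`: in `Σ Y i X i Y j X j` the terms with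
all `Y` moved to the left cancel in pairs or contain `X i X i = 0`, and only the commutators
`[X i, Y i] = T` survive. Applying this identity to products `f g` and `f g h` yields
`L {f, g} = M_f (L g) + M_g (L f)` and the Jacobi identity for `⟨·, ·⟩` up to terms in `T`; these
give closure of `b_{a,b}` and the morphism property. Both hold already in `K[τ, q, ξ]`, and every
derivation preserves `(ξ_1², …, ξ_n²)` because `d (ξ²) = 2 ξ d ξ = 0`.
-/

section Derivation

variable {R A : Type*} [CommSemiring R] [CommSemiring A] [Algebra R A]

theorem derivation_mem_span {S : Set A} (d : Derivation R A A) (hS : ∀ s ∈ S, d s ∈ Ideal.span S)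
    {u : A} (hu : u ∈ Ideal.span S) : d u ∈ Ideal.span S := by
  induction hu using Submodule.span_induction with
  | mem s hs => exact hS s hs
  | zero => simp
  | add x y _ _ hx hy => simpa only [map_add] using add_mem hx hy
  | smul c x hx ih =>
    rw [smul_eq_mul, d.leibniz]
    exact add_mem (Ideal.mul_mem_left _ c ih) (Ideal.mul_mem_right _ _ hx)

theorem derivation_sq_eq_zero [CharP A 2] (d : Derivation R A A) (x : A) : d (x ^ 2) = 0 := by
  rw [sq, d.leibniz, CharTwo.add_self_eq_zero]

end Derivation

theorem derivation_comm_of_lie_eq_zero {R A : Type*} [CommRing R] [CommRing A] [Algebra R A]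
    {d e : Derivation R A A} (h : ⁅d, e⁆ = 0) (f : A) : d (e f) = e (d f) := by
  rw [← sub_eq_zero, ← Derivation.commutator_apply, h, Derivation.zero_apply]

theorem sum_sum_eq_zero_of_symm_of_diag {ι A : Type*} [Fintype ι] [Semiring A] [CharP A 2]
    (t : ι → ι → A) (symm : ∀ i j, t i j = t j i) (diag : ∀ i, t i i = 0) :
    ∑ i, ∑ j, t i j = 0 := by
  rw [← Fintype.sum_prod_type']
  refine Finset.sum_involution (fun p _ => p.swap) ?_ ?_ (fun _ _ => Finset.mem_univ _)
    fun p _ => p.swap_swap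
  · rintro ⟨i, j⟩ -
    exact (congrArg (t i j + ·) (symm j i)).trans (CharTwo.add_self_eq_zero _)
  · rintro ⟨i, j⟩ - hne heq
    obtain rfl : j = i := congrArg Prod.fst heq
    exact hne (diag j)

section PDeriv

variable {σ R : Type*} [CommRing R]

theorem lie_pderiv_pderiv (i j : σ) : ⁅pderiv (R := R) i, pderiv (R := R) j⁆ = 0 := by
  classical
  refine derivation_ext fun k => ?_
  simp [Derivation.commutator_apply, pderiv_X, Pi.single_apply, apply_ite]

theorem pderiv_pderiv_self_eq_zero [CharP R 2] (i : σ) (f : MvPolynomial σ R) :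
    pderiv i (pderiv i f) = 0 := by
  classical
  induction f using MvPolynomial.induction_on with
  | C c => simp
  | add p q hp hq => simp [hp, hq]
  | mul_X p j hp =>
    rcases eq_or_ne j i with rfl | hne
    · simp [hp, CharTwo.add_self_eq_zero]
    · simp [hp, pderiv_X_of_ne hne]

end PDeriv

/-- A system of derivations `X i`, `Y i`, `T` of a commutative algebra satisfying the relations of
the Heisenberg Lie algebra with centre `T`, such that moreover the `X i` square to zero, as
coordinate derivations do in characteristic 2. It abstracts a Darboux frame of a contact structure:
the `X i` and `Y i` span the contact distribution and `T` is the Reeb field. -/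
structure HeisenbergFrame (R A ι : Type*) [CommRing R] [CommRing A] [Algebra R A] where
  T : Derivation R A A
  X : ι → Derivation R A A
  Y : ι → Derivation R A A
  lie_X_X : ∀ i j, ⁅X i, X j⁆ = 0
  lie_Y_Y : ∀ i j, ⁅Y i, Y j⁆ = 0
  lie_X_Y_self : ∀ i, ⁅X i, Y i⁆ = T
  lie_X_Y_of_ne : ∀ i j, i ≠ j → ⁅X i, Y j⁆ = 0
  lie_T_X : ∀ i, ⁅T, X i⁆ = 0
  lie_T_Y : ∀ i, ⁅T, Y i⁆ = 0
  X_X_self : ∀ i f, X i (X i f) = 0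

namespace HeisenbergFrame

variable {R A ι : Type*} [CommRing R] [CommRing A] [Algebra R A]
  (F : HeisenbergFrame R A ι)

theorem X_Y_apply [DecidableEq ι] (i j : ι) (f : A) :
    F.X i (F.Y j f) = F.Y j (F.X i f) + if i = j then F.T f else 0 := by
  split_ifs with hij
  · subst hij
    rw [← F.lie_X_Y_self i, Derivation.commutator_apply, add_sub_cancel]
  · rw [derivation_comm_of_lie_eq_zero (F.lie_X_Y_of_ne i j hij), add_zero]

variable [Fintype ι]

/-- The second-order operator `L = Σ Y i ∘ X i` of the frame. For the pericontact frame it is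
`E_q ∘ ∂_τ + Δ`. -/
def laplacian : Module.End R A :=
  ∑ i, (F.Y i : A →ₗ[R] A) ∘ₗ (F.X i : A →ₗ[R] A)

/-- The antibracket `⟨f, ·⟩ = Σ (X i f • Y i + Y i f • X i)`: the symmetric biderivation measuring
the failure of `laplacian` to be a derivation. -/
def antibracket (f : A) : Derivation R A A :=
  ∑ i, (F.X i f • F.Y i + F.Y i f • F.X i)

/-- The contact vector field `M_f = f T + ⟨f, ·⟩` with generating function `f`. -/
def contactField (f : A) : Derivation R A A :=
  f • F.T + F.antibracket f

/-- The contact bracket `{f, g} = T (f g) + ⟨f, g⟩` of generating functions. -/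
def contactBracket (f g : A) : A :=
  F.T (f * g) + F.antibracket f g

/-- The operator `b T + a L`, whose kernel is the deformed Buttin subalgebra `b_{a,b}`. -/
def deformedOp (a b : R) : Module.End R A :=
  b • (F.T : A →ₗ[R] A) + a • F.laplacian

theorem laplacian_apply (f : A) : F.laplacian f = ∑ i, F.Y i (F.X i f) := by
  simp [laplacian]

theorem antibracket_apply (f g : A) :
    F.antibracket f g = ∑ i, (F.X i f * F.Y i g + F.Y i f * F.X i g) := by
  rw [antibracket, ← Derivation.coeFnAddMonoidHom_apply, map_sum, Finset.sum_apply]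
  rfl

theorem contactField_apply (f g : A) :
    F.contactField f g = f * F.T g + F.antibracket f g := rfl

theorem deformedOp_apply (a b : R) (f : A) :
    F.deformedOp a b f = b • F.T f + a • F.laplacian f := rfl

theorem antibracket_comm (f g : A) : F.antibracket f g = F.antibracket g f := by
  simp only [antibracket_apply]
  exact Finset.sum_congr rfl fun i _ => by ring

theorem antibracket_add_left (f g h : A) :
    F.antibracket (f + g) h = F.antibracket f h + F.antibracket g h := by
  simp only [F.antibracket_comm _ h, map_add]

theorem antibracket_mul_left (f g h : A) :
    F.antibracket (f * g) h = f * F.antibracket g h + g * F.antibracket f h := by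
  simp only [F.antibracket_comm _ h, Derivation.leibniz, smul_eq_mul]

theorem laplacian_mul (f g : A) :
    F.laplacian (f * g) = f * F.laplacian g + g * F.laplacian f + F.antibracket f g := by
  simp only [laplacian_apply, antibracket_apply, Finset.mul_sum, ← Finset.sum_add_distrib]
  refine Finset.sum_congr rfl fun i _ => ?_
  simp only [map_add, Derivation.leibniz, smul_eq_mul]
  ring

theorem T_laplacian (f : A) : F.T (F.laplacian f) = F.laplacian (F.T f) := by
  simp only [laplacian_apply, map_sum, derivation_comm_of_lie_eq_zero (F.lie_T_X _),
    derivation_comm_of_lie_eq_zero (F.lie_T_Y _)]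

theorem T_antibracket (f g : A) :
    F.T (F.antibracket f g) = F.antibracket (F.T f) g + F.antibracket f (F.T g) := by
  have h := F.T_laplacian (f * g)
  simp only [laplacian_mul, map_add, Derivation.leibniz, smul_eq_mul, T_laplacian,
    F.antibracket_comm g] at h
  linear_combination h

section CharTwo

variable [CharP A 2]

theorem laplacian_laplacian (f : A) : F.laplacian (F.laplacian f) = F.T (F.laplacian f) := by
  classical
  have symmetric_part : ∑ i, ∑ j, F.Y i (F.Y j (F.X i (F.X j f))) = 0 := by
    refine sum_sum_eq_zero_of_symm_of_diag _ (fun i j => ?_) fun i => ?_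
    · rw [derivation_comm_of_lie_eq_zero (F.lie_X_X i j),
        derivation_comm_of_lie_eq_zero (F.lie_Y_Y i j)]
    · rw [F.X_X_self, map_zero, map_zero]
  calc F.laplacian (F.laplacian f)
      = ∑ i, F.Y i (F.X i (∑ j, F.Y j (F.X j f))) := by simp only [laplacian_apply]
    _ = ∑ i, ∑ j, F.Y i (F.X i (F.Y j (F.X j f))) := by simp only [map_sum]
    _ = ∑ i, ∑ j, F.Y i (F.Y j (F.X i (F.X j f))) + ∑ i, F.Y i (F.T (F.X i f)) := by
      simp only [X_Y_apply, map_add, Finset.sum_add_distrib, apply_ite (F.Y _), map_zero,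
        Finset.sum_ite_eq, Finset.mem_univ, if_true]
    _ = F.T (F.laplacian f) := by
      simp only [symmetric_part, zero_add, laplacian_apply, map_sum,
        derivation_comm_of_lie_eq_zero (F.lie_T_Y _)]

theorem laplacian_antibracket (f g : A) :
    F.laplacian (F.antibracket f g) = F.T (F.antibracket f g)
      + F.T f * F.laplacian g + F.T g * F.laplacian f
      + F.antibracket f (F.laplacian g) + F.antibracket g (F.laplacian f) := by
  have h := F.laplacian_laplacian (f * g)
  have two : (2 : A) = 0 := CharTwo.two_eq_zero
  simp only [laplacian_mul, map_add, laplacian_laplacian, Derivation.leibniz, smul_eq_mul] at h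
  linear_combination h - (F.laplacian f * F.laplacian g + F.antibracket f (F.laplacian g)
    + F.antibracket g (F.laplacian f)) * two

/-- The terms in `T` are the defect of the Jacobi identity caused by `L² = T L` not vanishing. -/
theorem antibracket_jacobi (f g h : A) :
    F.antibracket f (F.antibracket g h) + F.antibracket g (F.antibracket f h)
      = F.antibracket (F.antibracket f g) h + F.T f * F.antibracket g h
        + F.T g * F.antibracket f h + F.T h * F.antibracket f g := by
  have product_rule := F.laplacian_antibracket f (g * h)
  have two : (2 : A) = 0 := CharTwo.two_eq_zero
  simp only [laplacian_mul, map_add, laplacian_antibracket, Derivation.leibniz, smul_eq_mul,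
    antibracket_mul_left, F.antibracket_comm h (F.antibracket f g)] at product_rule
  linear_combination product_rule + (F.antibracket f (F.antibracket g h)
    - F.antibracket (F.antibracket f g) h) * two

theorem lie_contactField (f g : A) :
    ⁅F.contactField f, F.contactField g⁆ = F.contactField (F.contactBracket f g) := by
  ext h
  have jacobi := F.antibracket_jacobi f g h
  have two : (2 : A) = 0 := CharTwo.two_eq_zero
  simp only [Derivation.commutator_apply, contactField_apply, contactBracket, map_add,
    Derivation.leibniz, smul_eq_mul, T_antibracket, antibracket_add_left, antibracket_mul_left,
    F.antibracket_comm g f]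
  linear_combination jacobi - (g * F.T h * F.T f + g * F.antibracket (F.T f) h
    + F.antibracket g (F.antibracket f h)) * two

theorem T_contactBracket (f g : A) :
    F.T (F.contactBracket f g) = F.contactField f (F.T g) + F.contactField g (F.T f) := by
  have two : (2 : A) = 0 := CharTwo.two_eq_zero
  simp only [contactBracket, contactField_apply, map_add, Derivation.leibniz, smul_eq_mul,
    T_antibracket, F.antibracket_comm g (F.T f)]
  linear_combination F.T f * F.T g * two

theorem laplacian_contactBracket (f g : A) :
    F.laplacian (F.contactBracket f g)
      = F.contactField f (F.laplacian g) + F.contactField g (F.laplacian f) := by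
  have two : (2 : A) = 0 := CharTwo.two_eq_zero
  rw [contactBracket, map_add, ← T_laplacian, laplacian_mul, laplacian_antibracket]
  simp only [contactField_apply, map_add, Derivation.leibniz, smul_eq_mul]
  linear_combination (F.T (F.antibracket f g) + F.T f * F.laplacian g + F.T g * F.laplacian f) * two

theorem deformedOp_contactBracket (a b : R) (f g : A) :
    F.deformedOp a b (F.contactBracket f g)
      = F.contactField f (F.deformedOp a b g) + F.contactField g (F.deformedOp a b f) := by
  simp only [deformedOp_apply, T_contactBracket, laplacian_contactBracket, map_add,
    Derivation.map_smul, smul_add]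
  abel

end CharTwo

end HeisenbergFrame

theorem pericontact_morphism_and_bab_closed_general {R A ι : Type*} [CommRing R] [CommRing A]
    [Algebra R A] [CharP A 2] [Fintype ι] (F : HeisenbergFrame R A ι) (I : Ideal A)
    (contactField_mem : ∀ f, ∀ u ∈ I, F.contactField f u ∈ I) (a b : R) :
    (∀ f g, ⁅F.contactField f, F.contactField g⁆ = F.contactField (F.contactBracket f g)) ∧
    (∀ f g, F.deformedOp a b f ∈ I → F.deformedOp a b g ∈ I →
      F.deformedOp a b (F.contactBracket f g) ∈ I) := by
  refine ⟨F.lie_contactField, fun f g hf hg => ?_⟩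
  rw [F.deformedOp_contactBracket]
  exact add_mem (contactField_mem f _ hg) (contactField_mem g _ hf)

section Pericontact

variable (K : Type*) [Field K] [CharP K 2] (n : ℕ)

/-- The frame `X i = ∂_{q_i}`, `Y i = ∂_{ξ_i} + q_i ∂_τ`, `T = ∂_τ`, taken on the polynomial ring
`K[τ, q, ξ]`, that is, before passing to the quotient `B`. -/
noncomputable def pericontactFrame : HeisenbergFrame K (BR K n) (Fin n) where
  T := pderiv none
  X i := pderiv (some (Sum.inl i))
  Y i := pderiv (some (Sum.inr i)) + (X (some (Sum.inl i)) : BR K n) • pderiv none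
  lie_X_X _ _ := lie_pderiv_pderiv _ _
  lie_Y_Y i j := by
    classical
    refine derivation_ext fun k => ?_
    simp [Derivation.commutator_apply, pderiv_X, Pi.single_apply, apply_ite (pderiv _)]
  lie_X_Y_self i := by
    classical
    refine derivation_ext fun k => ?_
    simp [Derivation.commutator_apply, pderiv_X, Pi.single_apply, apply_ite (pderiv _)]
  lie_X_Y_of_ne i j hij := by
    classical
    refine derivation_ext fun k => ?_
    simp [Derivation.commutator_apply, pderiv_X, Pi.single_apply, apply_ite (pderiv _), hij]
  lie_T_X _ := lie_pderiv_pderiv _ _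
  lie_T_Y i := by
    classical
    refine derivation_ext fun k => ?_
    simp [Derivation.commutator_apply, pderiv_X, Pi.single_apply, apply_ite (pderiv _)]
  X_X_self _ := pderiv_pderiv_self_eq_zero _

variable {K n}

theorem MF_eq_contactField (f h : BR K n) :
    MF K n f h = (pericontactFrame K n).contactField f h := by
  rw [HeisenbergFrame.contactField_apply, HeisenbergFrame.antibracket_apply]
  rfl

theorem pericontactFrame_antibracket (f g : BR K n) :
    (pericontactFrame K n).antibracket f g
      = pderiv none f * eulerQ K n g + eulerQ K n f * pderiv none g
        + ∑ i : Fin n,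
            (pderiv (some (Sum.inl i)) f * pderiv (some (Sum.inr i)) g
              + pderiv (some (Sum.inr i)) f * pderiv (some (Sum.inl i)) g) := by
  simp only [HeisenbergFrame.antibracket_apply, eulerQ, Finset.mul_sum, Finset.sum_mul,
    ← Finset.sum_add_distrib]
  refine Finset.sum_congr rfl fun i _ => ?_
  simp only [pericontactFrame, Derivation.add_apply, Derivation.smul_apply, smul_eq_mul]
  ring

theorem pericontactFrame_laplacian (f : BR K n) :
    (pericontactFrame K n).laplacian f = eulerQ K n (pderiv none f) + lapQXi K n f := by
  rw [HeisenbergFrame.laplacian_apply, eulerQ, lapQXi, ← Finset.sum_add_distrib]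
  refine Finset.sum_congr rfl fun i _ => ?_
  simp only [pericontactFrame, Derivation.add_apply, Derivation.smul_apply, smul_eq_mul,
    derivation_comm_of_lie_eq_zero (lie_pderiv_pderiv (some (Sum.inl i)) _)]
  ring

theorem periBr_eq_contactBracket (f g : BR K n) :
    periBr K n f g = (pericontactFrame K n).contactBracket f g := by
  rw [periBr, HeisenbergFrame.contactBracket, pericontactFrame_antibracket, Derivation.leibniz]
  simp only [pericontactFrame, smul_eq_mul]
  ring

theorem babCond_eq_deformedOp (a b : K) (f : BR K n) :
    babCond K n a b f = (pericontactFrame K n).deformedOp a b f := by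
  rw [babCond, HeisenbergFrame.deformedOp_apply, pericontactFrame_laplacian, smul_eq_C_mul,
    smul_eq_C_mul, mul_add, add_assoc]
  rfl

theorem derivation_mem_xiIdeal (d : Derivation K (BR K n) (BR K n)) {u : BR K n}
    (hu : u ∈ xiIdeal K n) : d u ∈ xiIdeal K n := by
  refine derivation_mem_span d ?_ hu
  rintro _ ⟨i, rfl⟩
  simp only [derivation_sq_eq_zero, zero_mem]

end Pericontact

/-- For `p = 2`: (1) `[M_f, M_g] = M_{{f,g}}` as operators on `B` (i.e. modulo `xiIdeal`);
(2) for any `a, b ∈ K`, the subspace `b_{a,b} = {f : (b + a E_q)(∂_τ f) + a Δ f = 0 in B}`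
is closed under the pericontact bracket.  Consequently `{M_f : f ∈ b_{a,b}}` is a Lie
subalgebra of the derivations of `B` — the `p = 2` analog `po_{a,b} = F(b_{a,b}(n))` of the
deformed Buttin series. -/
theorem pericontact_morphism_and_bab_closed {K : Type*} [Field K] [CharP K 2]
    (n : ℕ) (hn : 1 ≤ n) (a b : K) :
    (∀ f g h : BR K n,
      MF K n f (MF K n g h) - MF K n g (MF K n f h) - MF K n (periBr K n f g) h
        ∈ xiIdeal K n) ∧
    (∀ f g : BR K n, babCond K n a b f ∈ xiIdeal K n → babCond K n a b g ∈ xiIdeal K n →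
      babCond K n a b (periBr K n f g) ∈ xiIdeal K n) := by
  obtain ⟨morphism, closed⟩ := pericontact_morphism_and_bab_closed_general
    (pericontactFrame K n) (xiIdeal K n) (fun _ _ => derivation_mem_xiIdeal _) a b
  simp only [MF_eq_contactField, periBr_eq_contactBracket, babCond_eq_deformedOp, ← morphism,
    Derivation.commutator_apply, sub_self, zero_mem, implies_true, true_and]
  exact closed
end
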